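/- arXiv:2007.10968 — 3 statements merged into one kernel-verified Lean document; each statement's English description precedes it below -/
import Mathlib

section
/- Characterization of vortex solutions (Proposition 3.5(b), flat torus case): let (u, A) be a periodic configuration solving the YMH equations with u not identically zero. Then F ≡ h on ℝ² if and only if σ₊ ≡ 0 on ℝ², and F ≡ −h on ℝ² if and only if σ₋ ≡ 0 on ℝ². -/
open MeasureTheory Complex

noncomputable section

/-- Partial derivative in the first coordinate direction. -/
def pd1 {E : Type*} [NormedAddCommGroup E] [NormedSpace ℝ E] (f : ℝ × ℝ → E) (x : ℝ × ℝ) : E :=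
  fderiv ℝ f x (1, 0)

/-- Partial derivative in the second coordinate direction. -/
def pd2 {E : Type*} [NormedAddCommGroup E] [NormedSpace ℝ E] (f : ℝ × ℝ → E) (x : ℝ × ℝ) : E :=
  fderiv ℝ f x (0, 1)

/-- First covariant derivative `D₁f = ∂₁f − iA₁f`. -/
def D1 (A1 : ℝ × ℝ → ℝ) (f : ℝ × ℝ → ℂ) (x : ℝ × ℝ) : ℂ :=
  pd1 f x - Complex.I * (A1 x) * f x

/-- Second covariant derivative `D₂f = ∂₂f − iA₂f`. -/
def D2 (A2 : ℝ × ℝ → ℝ) (f : ℝ × ℝ → ℂ) (x : ℝ × ℝ) : ℂ :=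
  pd2 f x - Complex.I * (A2 x) * f x

/-- Curvature function `F = ∂₁A₂ − ∂₂A₁`. -/
def curv (A1 A2 : ℝ × ℝ → ℝ) (x : ℝ × ℝ) : ℝ := pd1 A2 x - pd2 A1 x

/-- `h = (1 − |u|²)/(2ε²)`. -/
def hfun (ε : ℝ) (u : ℝ × ℝ → ℂ) (x : ℝ × ℝ) : ℝ := (1 - ‖u x‖ ^ 2) / (2 * ε ^ 2)

/-- `σ₊ = D₁u + iD₂u`. -/
def sigP (u : ℝ × ℝ → ℂ) (A1 A2 : ℝ × ℝ → ℝ) (x : ℝ × ℝ) : ℂ :=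
  D1 A1 u x + Complex.I * D2 A2 u x

/-- `σ₋ = D₁u − iD₂u`. -/
def sigM (u : ℝ × ℝ → ℂ) (A1 A2 : ℝ × ℝ → ℝ) (x : ℝ × ℝ) : ℂ :=
  D1 A1 u x - Complex.I * D2 A2 u x

/-- The Yang--Mills--Higgs energy over the fundamental domain `[0,1]²`. -/
def energy (ε : ℝ) (u : ℝ × ℝ → ℂ) (A1 A2 : ℝ × ℝ → ℝ) : ℝ :=
  ∫ x in Set.Icc (0:ℝ) 1 ×ˢ Set.Icc (0:ℝ) 1,
    (ε ^ 2 * curv A1 A2 x ^ 2 + ‖D1 A1 u x‖ ^ 2 + ‖D2 A2 u x‖ ^ 2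
      + (1 - ‖u x‖ ^ 2) ^ 2 / (4 * ε ^ 2))

/-- `ℤ²`-periodicity. -/
def Periodic2 {E : Type*} (f : ℝ × ℝ → E) : Prop :=
  ∀ x : ℝ × ℝ, f (x.1 + 1, x.2) = f x ∧ f (x.1, x.2 + 1) = f x

/-- The Yang--Mills--Higgs equations on all of `ℝ²`. -/
def IsYMH (ε : ℝ) (u : ℝ × ℝ → ℂ) (A1 A2 : ℝ × ℝ → ℝ) : Prop :=
  (∀ x, -(D1 A1 (D1 A1 u) x + D2 A2 (D2 A2 u) x) = (hfun ε u x : ℂ) * u x) ∧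
  (∀ x, ε ^ 2 * pd2 (curv A1 A2) x = ((starRingEnd ℂ) (u x) * D1 A1 u x).im) ∧
  (∀ x, ε ^ 2 * pd1 (curv A1 A2) x = -((starRingEnd ℂ) (u x) * D2 A2 u x).im)

/-- The Yang--Mills--Higgs equations on an open set `U ⊆ ℝ²`. -/
def IsYMHOn (ε : ℝ) (u : ℝ × ℝ → ℂ) (A1 A2 : ℝ × ℝ → ℝ) (U : Set (ℝ × ℝ)) : Prop :=
  (∀ x ∈ U, -(D1 A1 (D1 A1 u) x + D2 A2 (D2 A2 u) x) = (hfun ε u x : ℂ) * u x) ∧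
  (∀ x ∈ U, ε ^ 2 * pd2 (curv A1 A2) x = ((starRingEnd ℂ) (u x) * D1 A1 u x).im) ∧
  (∀ x ∈ U, ε ^ 2 * pd1 (curv A1 A2) x = -((starRingEnd ℂ) (u x) * D2 A2 u x).im)

/-- Stability: nonnegative second variation of the energy along all smooth periodic
variations of the section and the connection. -/
def Stable (ε : ℝ) (u : ℝ × ℝ → ℂ) (A1 A2 : ℝ × ℝ → ℝ) : Prop :=
  ∀ v : ℝ × ℝ → ℂ, ∀ a1 a2 : ℝ × ℝ → ℝ,
    ContDiff ℝ (⊤ : ℕ∞) v → Periodic2 v → ContDiff ℝ (⊤ : ℕ∞) a1 → Periodic2 a1 →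
    ContDiff ℝ (⊤ : ℕ∞) a2 → Periodic2 a2 →
    0 ≤ iteratedDeriv 2 (fun t : ℝ =>
      energy ε (fun x => u x + t • v x)
        (fun x => A1 x + t * a1 x) (fun x => A2 x + t * a2 x)) 0

open Topology in
theorem pd_symm (u : ℝ × ℝ → ℂ) (hu : ContDiff ℝ (⊤ : ℕ∞) u) (x : ℝ × ℝ) :
    pd1 (pd2 u) x = pd2 (pd1 u) x := by
  have hs : IsSymmSndFDerivAt ℝ u x :=
    hu.contDiffAt.isSymmSndFDerivAt (by
      rw [minSmoothness_of_isRCLikeNormedField]; exact WithTop.coe_le_coe.mpr le_top)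
  have hd : DifferentiableAt ℝ (fderiv ℝ u) x :=
    ((hu.fderiv_right (m := (⊤ : ℕ∞)) (by simp)).differentiable (by simp)) x
  have h1 : pd1 (pd2 u) x = fderiv ℝ (fderiv ℝ u) x (1, 0) (0, 1) := by
    unfold pd1 pd2
    rw [fderiv_clm_apply hd (differentiableAt_const _)]
    simp
  have h2 : pd2 (pd1 u) x = fderiv ℝ (fderiv ℝ u) x (0, 1) (1, 0) := by
    unfold pd1 pd2
    rw [fderiv_clm_apply hd (differentiableAt_const _)]
    simp
  rw [h1, h2, hs.eq]

theorem cd_pd1 {E : Type*} [NormedAddCommGroup E] [NormedSpace ℝ E] {f : ℝ × ℝ → E}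
    (hf : ContDiff ℝ (⊤ : ℕ∞) f) : ContDiff ℝ (⊤ : ℕ∞) (pd1 f) :=
  (hf.fderiv_right (m := (⊤ : ℕ∞)) (by simp)).clm_apply contDiff_const

theorem cd_pd2 {E : Type*} [NormedAddCommGroup E] [NormedSpace ℝ E] {f : ℝ × ℝ → E}
    (hf : ContDiff ℝ (⊤ : ℕ∞) f) : ContDiff ℝ (⊤ : ℕ∞) (pd2 f) :=
  (hf.fderiv_right (m := (⊤ : ℕ∞)) (by simp)).clm_apply contDiff_const

theorem cd_ofReal {f : ℝ × ℝ → ℝ} (hf : ContDiff ℝ (⊤ : ℕ∞) f) :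
    ContDiff ℝ (⊤ : ℕ∞) (fun x => (f x : ℂ)) :=
  Complex.ofRealCLM.contDiff.comp hf

theorem cd_D1 {A : ℝ × ℝ → ℝ} {f : ℝ × ℝ → ℂ} (hA : ContDiff ℝ (⊤ : ℕ∞) A)
    (hf : ContDiff ℝ (⊤ : ℕ∞) f) : ContDiff ℝ (⊤ : ℕ∞) (D1 A f) :=
  (cd_pd1 hf).sub ((contDiff_const.mul (cd_ofReal hA)).mul hf)

theorem cd_D2 {A : ℝ × ℝ → ℝ} {f : ℝ × ℝ → ℂ} (hA : ContDiff ℝ (⊤ : ℕ∞) A)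
    (hf : ContDiff ℝ (⊤ : ℕ∞) f) : ContDiff ℝ (⊤ : ℕ∞) (D2 A f) :=
  (cd_pd2 hf).sub ((contDiff_const.mul (cd_ofReal hA)).mul hf)

theorem df {E : Type*} [NormedAddCommGroup E] [NormedSpace ℝ E] {f : ℝ × ℝ → E}
    (hf : ContDiff ℝ (⊤ : ℕ∞) f) (x : ℝ × ℝ) : DifferentiableAt ℝ f x :=
  hf.differentiable (by simp) x

theorem fd_conn {A : ℝ × ℝ → ℝ} {f g : ℝ × ℝ → ℂ} (hA : ContDiff ℝ (⊤ : ℕ∞) A)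
    (hf : ContDiff ℝ (⊤ : ℕ∞) f) (hg : ContDiff ℝ (⊤ : ℕ∞) g) (x v : ℝ × ℝ) :
    fderiv ℝ (fun y => g y - Complex.I * (A y) * f y) x v =
      fderiv ℝ g x v - Complex.I * (fderiv ℝ A x v * f x + A x * fderiv ℝ f x v) := by
  have hA' : HasFDerivAt (fun y => (A y : ℂ)) (Complex.ofRealCLM.comp (fderiv ℝ A x)) x :=
    Complex.ofRealCLM.hasFDerivAt.comp x (df hA x).hasFDerivAt
  have := ((df hg x).hasFDerivAt.sub
    ((hA'.const_mul Complex.I).mul (df hf x).hasFDerivAt)).fderiv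
  have h2 := congrArg (fun L => L v) this
  simp at h2
  refine Eq.trans h2 ?_
  ring

theorem fd_hfun (ε : ℝ) (hε : 0 < ε) {u : ℝ × ℝ → ℂ}
    (hu : ContDiff ℝ (⊤ : ℕ∞) u) (x v : ℝ × ℝ) :
    HasFDerivAt (hfun ε u) (fderiv ℝ (hfun ε u) x) x ∧
    ε ^ 2 * fderiv ℝ (hfun ε u) x v = -((starRingEnd ℂ) (u x) * fderiv ℝ u x v).re := by
  have h1 := ((((df hu x).hasFDerivAt.norm_sq).const_sub 1).mul_const ((2 * ε ^ 2)⁻¹))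
  have h3 : HasFDerivAt (hfun ε u) _ x := h1
  refine ⟨h3.differentiableAt.hasFDerivAt, ?_⟩
  rw [h3.fderiv]
  simp [Complex.inner]
  field_simp
  ring

theorem vortex_aux (s : ℝ) (hs : s * s = 1)
    (ε : ℝ) (hε : 0 < ε) (u : ℝ × ℝ → ℂ) (A1 A2 : ℝ × ℝ → ℝ)
    (hu : ContDiff ℝ (⊤ : ℕ∞) u)
    (hA1 : ContDiff ℝ (⊤ : ℕ∞) A1)
    (hA2 : ContDiff ℝ (⊤ : ℕ∞) A2)
    (hYMH : IsYMH ε u A1 A2) (hne : ∃ x, u x ≠ 0) :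
    (∀ x, curv A1 A2 x = s * hfun ε u x) ↔
      (∀ x, D1 A1 u x + s * Complex.I * D2 A2 u x = 0) := by
  obtain ⟨e1, e2, e3⟩ := hYMH
  have hF : ContDiff ℝ (⊤ : ℕ∞) (curv A1 A2) := (cd_pd1 hA2).sub (cd_pd2 hA1)
  set G : ℝ × ℝ → ℝ := fun x => curv A1 A2 x - s * hfun ε u x with hG
  have hGd : ∀ x, HasFDerivAt G
      (fderiv ℝ (curv A1 A2) x - s • fderiv ℝ (hfun ε u) x) x := fun x =>
    (df hF x).hasFDerivAt.sub ((fd_hfun ε hε hu x 0).1.const_mul s)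
  have g1 : ∀ x, ε ^ 2 * fderiv ℝ G x (1, 0) =
      s * ((starRingEnd ℂ) (u x) * (D1 A1 u x + s * Complex.I * D2 A2 u x)).re := by
    intro x
    have a := e3 x
    have b := (fd_hfun ε hε hu x (1, 0)).2
    rw [(hGd x).fderiv]
    simp only [pd1, pd2, D1, D2, ContinuousLinearMap.sub_apply, ContinuousLinearMap.smul_apply,
      smul_eq_mul] at a b ⊢
    rw [mul_sub, a, mul_left_comm, b]
    simp
    linear_combination (-((u x).re * ((fderiv ℝ u x) (0, 1)).im - (u x).im * ((fderiv ℝ u x) (0, 1)).re - A2 x * ((u x).re^2 + (u x).im^2))) * (-hs)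
  have g2 : ∀ x, ε ^ 2 * fderiv ℝ G x (0, 1) =
      ((starRingEnd ℂ) (u x) * (D1 A1 u x + s * Complex.I * D2 A2 u x)).im := by
    intro x
    have a := e2 x
    have b := (fd_hfun ε hε hu x (0, 1)).2
    rw [(hGd x).fderiv]
    simp only [pd1, pd2, D1, D2, ContinuousLinearMap.sub_apply, ContinuousLinearMap.smul_apply,
      smul_eq_mul] at a b ⊢
    rw [mul_sub, a, mul_left_comm, b]
    simp
    ring
  have cσ : ContDiff ℝ (⊤ : ℕ∞) (fun x => D1 A1 u x + s * Complex.I * D2 A2 u x) :=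
    (cd_D1 hA1 hu).add (contDiff_const.mul (cd_D2 hA2 hu))
  have hε2 : ε ^ 2 ≠ 0 := by positivity
  have hs0 : s ≠ 0 := by rintro rfl; simp at hs
  constructor
  · intro h x
    have hG0 : G = fun _ => 0 := by
      funext y; simp [hG, h y]
    have key : ∀ y, u y ≠ 0 → D1 A1 u y + s * Complex.I * D2 A2 u y = 0 := by
      intro y hy
      have a := g1 y
      have b := g2 y
      rw [hG0] at a b
      simp only [fderiv_fun_const, Pi.zero_apply, ContinuousLinearMap.zero_apply, mul_zero] at a b
      have a' := (mul_eq_zero.mp a.symm).resolve_left hs0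
      have : (starRingEnd ℂ) (u y) * (D1 A1 u y + s * Complex.I * D2 A2 u y) = 0 :=
        Complex.ext a' b.symm
      refine (mul_eq_zero.mp this).resolve_left ?_
      simpa using hy
    by_cases hx : x ∈ closure {y | u y ≠ 0}
    · have hc : IsClosed {y | D1 A1 u y + s * Complex.I * D2 A2 u y = 0} :=
        isClosed_eq cσ.continuous continuous_const
      exact hc.closure_subset_iff.mpr (fun y hy => key y hy) hx
    · have hev : u =ᶠ[nhds x] fun _ => 0 := by
        have := isClosed_closure.isOpen_compl.mem_nhds hx
        filter_upwards [this] with y hy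
        by_contra hy'
        exact hy (subset_closure hy')
      have hfd := hev.fderiv_eq (𝕜 := ℝ)
      simp [D1, D2, pd1, pd2, hfd, hev.eq_of_nhds]
  · intro h
    have hd0 : ∀ x, fderiv ℝ G x = 0 := by
      intro x
      have a := g1 x
      have b := g2 x
      rw [h x] at a b
      simp [hε.ne'] at a b
      ext <;> simp [a, b]
    have hconst := is_const_of_fderiv_eq_zero (𝕜 := ℝ) (fun x => (hGd x).differentiableAt) hd0
    obtain ⟨x0, hx0⟩ := hne
    have hz : (fun x => D1 A1 u x + s * Complex.I * D2 A2 u x) = fun _ => 0 := funext h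
    have hz1 : ∀ v, fderiv ℝ (D1 A1 u) x0 v + s * Complex.I * fderiv ℝ (D2 A2 u) x0 v = 0 := by
      intro v
      have h1 := ((df (cd_D1 hA1 hu) x0).hasFDerivAt.add
        ((df (cd_D2 hA2 hu) x0).hasFDerivAt.const_mul (s * Complex.I))).fderiv
      have h2 : fderiv ℝ (fun x => D1 A1 u x + s * Complex.I * D2 A2 u x) x0 v = _ :=
        congrArg (fun L => L v) h1
      rw [hz] at h2
      simpa using h2.symm
    have k1 := hz1 (1, 0)
    have k2 := hz1 (0, 1)
    have k0 := h x0
    have sym := pd_symm u hu x0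
    have E := e1 x0
    have x11 := fd_conn hA1 hu (cd_pd1 hu) x0 (1, 0)
    have x12 := fd_conn hA1 hu (cd_pd1 hu) x0 (0, 1)
    have x21 := fd_conn hA2 hu (cd_pd2 hu) x0 (1, 0)
    have x22 := fd_conn hA2 hu (cd_pd2 hu) x0 (0, 1)
    change fderiv ℝ (D1 A1 u) x0 _ = _ at x11
    change fderiv ℝ (D1 A1 u) x0 _ = _ at x12
    change fderiv ℝ (D2 A2 u) x0 _ = _ at x21
    change fderiv ℝ (D2 A2 u) x0 _ = _ at x22
    have hsC : (s : ℂ) * s = 1 := by exact_mod_cast hs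
    have I2 := Complex.I_mul_I
    have main : ((curv A1 A2 x0 : ℂ) - s * hfun ε u x0) * u x0 = 0 := by
      have cv : (curv A1 A2 x0 : ℂ) = (fderiv ℝ A2 x0 (1,0) : ℂ) - (fderiv ℝ A1 x0 (0,1) : ℂ) := by
        simp [curv, pd1, pd2]
      rw [sub_mul, mul_assoc, ← E, cv]
      change fderiv ℝ (pd2 u) x0 (1, 0) = fderiv ℝ (pd1 u) x0 (0, 1) at sym
      have t1 : D1 A1 (D1 A1 u) x0 = fderiv ℝ (D1 A1 u) x0 (1, 0) - Complex.I * A1 x0 * D1 A1 u x0 := rfl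
      have t2 : D2 A2 (D2 A2 u) x0 = fderiv ℝ (D2 A2 u) x0 (0, 1) - Complex.I * A2 x0 * D2 A2 u x0 := rfl
      have r1 : D1 A1 u x0 = fderiv ℝ u x0 (1, 0) - Complex.I * A1 x0 * u x0 := rfl
      have r2 : D2 A2 u x0 = fderiv ℝ u x0 (0, 1) - Complex.I * A2 x0 * u x0 := rfl
      rw [t1, t2]
      have comm : (fderiv ℝ (D2 A2 u) x0 (1, 0) - Complex.I * A1 x0 * D2 A2 u x0)
          - (fderiv ℝ (D1 A1 u) x0 (0, 1) - Complex.I * A2 x0 * D1 A1 u x0)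
          = -Complex.I * ((fderiv ℝ A2 x0 (1,0) : ℂ) - (fderiv ℝ A1 x0 (0,1) : ℂ)) * u x0 := by
        rw [x21, x12, r1, r2, sym]; ring
      generalize fderiv ℝ (D1 A1 u) x0 (1, 0) = p11 at *
      generalize fderiv ℝ (D1 A1 u) x0 (0, 1) = p12 at *
      generalize fderiv ℝ (D2 A2 u) x0 (1, 0) = p21 at *
      generalize fderiv ℝ (D2 A2 u) x0 (0, 1) = p22 at *
      generalize D1 A1 u x0 = d1 at *
      generalize D2 A2 u x0 = d2 at *
      generalize ((fderiv ℝ A2 x0 (1,0) : ℂ) - (fderiv ℝ A1 x0 (0,1) : ℂ)) = c at *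
      generalize Complex.I = i at *
      generalize (s : ℂ) = S at *
      clear x11 x12 x21 x22 r1 r2 t1 t2 E
      have q1 : (p11 - i * A1 x0 * d1) + S * i * (p21 - i * A1 x0 * d2) = 0 := by
        linear_combination k1 - i * A1 x0 * k0
      have q2 : (p12 - i * A2 x0 * d1) + S * i * (p22 - i * A2 x0 * d2) = 0 := by
        linear_combination k2 - i * A2 x0 * k0
      generalize p11 - i * A1 x0 * d1 = P11 at *
      generalize p12 - i * A2 x0 * d1 = P12 at *
      generalize p21 - i * A1 x0 * d2 = P21 at *
      generalize p22 - i * A2 x0 * d2 = P22 at *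
      linear_combination S * q1 - i * q2 - i * comm + (P22 * S + c * u x0) * I2 - i * P21 * hsC
    have m2 := (mul_eq_zero.mp main).resolve_right hx0
    have m3 : G x0 = 0 := by
      simp only [hG]; exact_mod_cast m2
    intro x
    have := hconst x x0
    rw [m3] at this
    exact sub_eq_zero.mp this

/-- Characterization of vortex solutions (Proposition 3.5(b), flat torus case). -/
theorem vortex_characterization
    (ε : ℝ) (hε : 0 < ε) (u : ℝ × ℝ → ℂ) (A1 A2 : ℝ × ℝ → ℝ)
    (hu : ContDiff ℝ (⊤ : ℕ∞) u) (hup : Periodic2 u)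
    (hA1 : ContDiff ℝ (⊤ : ℕ∞) A1) (hA1p : Periodic2 A1)
    (hA2 : ContDiff ℝ (⊤ : ℕ∞) A2) (hA2p : Periodic2 A2)
    (hYMH : IsYMH ε u A1 A2) (hne : ∃ x, u x ≠ 0) :
    ((∀ x, curv A1 A2 x = hfun ε u x) ↔ (∀ x, sigP u A1 A2 x = 0)) ∧
    ((∀ x, curv A1 A2 x = -hfun ε u x) ↔ (∀ x, sigM u A1 A2 x = 0)) := by
  constructor
  · have := vortex_aux 1 (by norm_num) ε hε u A1 A2 hu hA1 hA2 hYMH hne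
    simpa [sigP] using this
  · have := vortex_aux (-1) (by norm_num) ε hε u A1 A2 hu hA1 hA2 hYMH hne
    simpa [sigM, sub_eq_add_neg] using this
end
end

section
/- Contraction of a twisted 1-form with a Killing field (Lemma 2.2(a), flat case): let X : ℝ² → ℝ² be a Killing field of the flat plane, X(x₁, x₂) = (c₁ − λx₂, c₂ + λx₁) for constants c₁, c₂, λ ∈ ℝ. Then for every smooth ℂ-valued 1-form ω = (ω₁, ω₂) on U one has −(D₁D₁ + D₂D₂)(X₁ω₁ + X₂ω₂) = X₁·(Δ_Aω)₁ + X₂·(Δ_Aω)₂ + i·F·(X₂ω₁ − X₁ω₂) − 2λ·(D₁ω₂ − D₂ω₁) pointwise on U. -/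
open MeasureTheory Complex

noncomputable section

/-- First component of the twisted Hodge Laplacian `Δ_A` on `ℂ`-valued 1-forms. -/
def lapA1 (A1 A2 : ℝ × ℝ → ℝ) (w1 w2 : ℝ × ℝ → ℂ) (x : ℝ × ℝ) : ℂ :=
  -(D1 A1 (fun y => D1 A1 w1 y + D2 A2 w2 y) x)
    + D2 A2 (fun y => D1 A1 w2 y - D2 A2 w1 y) x

/-- Second component of the twisted Hodge Laplacian `Δ_A` on `ℂ`-valued 1-forms. -/
def lapA2 (A1 A2 : ℝ × ℝ → ℝ) (w1 w2 : ℝ × ℝ → ℂ) (x : ℝ × ℝ) : ℂ :=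
  -(D2 A2 (fun y => D1 A1 w1 y + D2 A2 w2 y) x)
    - D1 A1 (fun y => D1 A1 w2 y - D2 A2 w1 y) x

section aux
variable {U : Set (ℝ × ℝ)} {x : ℝ × ℝ}

lemma aux_fderiv_mul (g : ℝ × ℝ → ℝ) (f : ℝ × ℝ → ℂ) (hg : DifferentiableAt ℝ g x)
    (hf : DifferentiableAt ℝ f x) (v : ℝ × ℝ) :
    fderiv ℝ (fun y => (g y : ℂ) * f y) x v
      = (g x : ℂ) * fderiv ℝ f x v + ((fderiv ℝ g x v : ℝ) : ℂ) * f x := by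
  have h : (fun y => (g y : ℂ) * f y) = fun y => g y • f y := by
    funext y; simp
  rw [h, fderiv_fun_smul hg hf]
  simp

lemma aux_fderiv_Imul (g : ℝ × ℝ → ℝ) (f : ℝ × ℝ → ℂ) (hg : DifferentiableAt ℝ g x)
    (hf : DifferentiableAt ℝ f x) (v : ℝ × ℝ) :
    fderiv ℝ (fun y => Complex.I * (g y : ℂ) * f y) x v
      = Complex.I * ((g x : ℂ) * fderiv ℝ f x v + ((fderiv ℝ g x v : ℝ) : ℂ) * f x) := by
  have h : (fun y => Complex.I * (g y : ℂ) * f y) = fun y => (g y : ℂ) * (Complex.I * f y) := by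
    funext y; ring
  rw [h, aux_fderiv_mul g _ hg (hf.const_mul _), fderiv_const_mul hf]
  simp
  ring

lemma aux_smooth_mul {g : ℝ × ℝ → ℝ} {f : ℝ × ℝ → ℂ} (hg : ContDiffOn ℝ (⊤ : ℕ∞) g U)
    (hf : ContDiffOn ℝ (⊤ : ℕ∞) f U) :
    ContDiffOn ℝ (⊤ : ℕ∞) (fun y => (g y : ℂ) * f y) U :=
  (Complex.ofRealCLM.contDiff.comp_contDiffOn hg).mul hf

lemma aux_diff {E : Type*} [NormedAddCommGroup E] [NormedSpace ℝ E] {f : ℝ × ℝ → E}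
    (hU : IsOpen U) (hf : ContDiffOn ℝ (⊤ : ℕ∞) f U) (hx : x ∈ U) : DifferentiableAt ℝ f x :=
  (hf.contDiffAt (hU.mem_nhds hx)).differentiableAt (by simp)

lemma aux_fderiv_smooth {f : ℝ × ℝ → ℂ} (hU : IsOpen U) (hf : ContDiffOn ℝ (⊤ : ℕ∞) f U)
    (v : ℝ × ℝ) : ContDiffOn ℝ (⊤ : ℕ∞) (fun y => fderiv ℝ f y v) U :=
  (hf.fderiv_of_isOpen hU (by simp)).clm_apply contDiffOn_const

lemma aux1_smooth {A : ℝ × ℝ → ℝ} {f : ℝ × ℝ → ℂ} (hU : IsOpen U)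
    (hA : ContDiffOn ℝ (⊤ : ℕ∞) A U) (hf : ContDiffOn ℝ (⊤ : ℕ∞) f U) :
    ContDiffOn ℝ (⊤ : ℕ∞) (D1 A f) U := by
  have h := (aux_fderiv_smooth hU hf (1, 0)).sub
    (contDiffOn_const (c := Complex.I) |>.mul (aux_smooth_mul hA hf))
  refine h.congr fun y _ => ?_
  simp only [D1, pd1]
  ring

lemma aux1_add (A : ℝ × ℝ → ℝ) {f g : ℝ × ℝ → ℂ} (hf : DifferentiableAt ℝ f x)
    (hg : DifferentiableAt ℝ g x) : D1 A (fun y => f y + g y) x = D1 A f x + D1 A g x := by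
  simp only [D1, pd1]
  rw [fderiv_fun_add hf hg]
  simp only [ContinuousLinearMap.add_apply]
  ring

lemma aux1_sub (A : ℝ × ℝ → ℝ) {f g : ℝ × ℝ → ℂ} (hf : DifferentiableAt ℝ f x)
    (hg : DifferentiableAt ℝ g x) : D1 A (fun y => f y - g y) x = D1 A f x - D1 A g x := by
  simp only [D1, pd1]
  rw [fderiv_fun_sub hf hg]
  simp only [ContinuousLinearMap.sub_apply]
  ring

lemma aux1_mul (A : ℝ × ℝ → ℝ) {g : ℝ × ℝ → ℝ} {f : ℝ × ℝ → ℂ} (hg : DifferentiableAt ℝ g x)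
    (hf : DifferentiableAt ℝ f x) :
    D1 A (fun y => (g y : ℂ) * f y) x = (g x : ℂ) * D1 A f x + ((pd1 g x : ℝ) : ℂ) * f x := by
  simp only [D1, pd1]
  rw [aux_fderiv_mul g f hg hf]
  ring

lemma aux1_congr (A : ℝ × ℝ → ℝ) {f g : ℝ × ℝ → ℂ} (hU : IsOpen U) (hx : x ∈ U)
    (h : ∀ y ∈ U, f y = g y) : D1 A f x = D1 A g x := by
  have e : f =ᶠ[nhds x] g := Filter.eventually_of_mem (hU.mem_nhds hx) h
  simp only [D1, pd1]
  rw [e.fderiv_eq, h x hx]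

lemma aux2_smooth {A : ℝ × ℝ → ℝ} {f : ℝ × ℝ → ℂ} (hU : IsOpen U)
    (hA : ContDiffOn ℝ (⊤ : ℕ∞) A U) (hf : ContDiffOn ℝ (⊤ : ℕ∞) f U) :
    ContDiffOn ℝ (⊤ : ℕ∞) (D2 A f) U := by
  have h := (aux_fderiv_smooth hU hf (0, 1)).sub
    (contDiffOn_const (c := Complex.I) |>.mul (aux_smooth_mul hA hf))
  refine h.congr fun y _ => ?_
  simp only [D2, pd2]
  ring

lemma aux2_add (A : ℝ × ℝ → ℝ) {f g : ℝ × ℝ → ℂ} (hf : DifferentiableAt ℝ f x)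
    (hg : DifferentiableAt ℝ g x) : D2 A (fun y => f y + g y) x = D2 A f x + D2 A g x := by
  simp only [D2, pd2]
  rw [fderiv_fun_add hf hg]
  simp only [ContinuousLinearMap.add_apply]
  ring

lemma aux2_sub (A : ℝ × ℝ → ℝ) {f g : ℝ × ℝ → ℂ} (hf : DifferentiableAt ℝ f x)
    (hg : DifferentiableAt ℝ g x) : D2 A (fun y => f y - g y) x = D2 A f x - D2 A g x := by
  simp only [D2, pd2]
  rw [fderiv_fun_sub hf hg]
  simp only [ContinuousLinearMap.sub_apply]
  ring

lemma aux2_mul (A : ℝ × ℝ → ℝ) {g : ℝ × ℝ → ℝ} {f : ℝ × ℝ → ℂ} (hg : DifferentiableAt ℝ g x)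
    (hf : DifferentiableAt ℝ f x) :
    D2 A (fun y => (g y : ℂ) * f y) x = (g x : ℂ) * D2 A f x + ((pd2 g x : ℝ) : ℂ) * f x := by
  simp only [D2, pd2]
  rw [aux_fderiv_mul g f hg hf]
  ring

lemma aux2_congr (A : ℝ × ℝ → ℝ) {f g : ℝ × ℝ → ℂ} (hU : IsOpen U) (hx : x ∈ U)
    (h : ∀ y ∈ U, f y = g y) : D2 A f x = D2 A g x := by
  have e : f =ᶠ[nhds x] g := Filter.eventually_of_mem (hU.mem_nhds hx) h
  simp only [D2, pd2]
  rw [e.fderiv_eq, h x hx]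

lemma aux_comm {A1 A2 : ℝ × ℝ → ℝ} {f : ℝ × ℝ → ℂ} (hU : IsOpen U)
    (hA1 : ContDiffOn ℝ (⊤ : ℕ∞) A1 U) (hA2 : ContDiffOn ℝ (⊤ : ℕ∞) A2 U)
    (hf : ContDiffOn ℝ (⊤ : ℕ∞) f U) (hx : x ∈ U) :
    D1 A1 (D2 A2 f) x = D2 A2 (D1 A1 f) x - Complex.I * curv A1 A2 x * f x := by
  have dA1 := aux_diff hU hA1 hx
  have dA2 := aux_diff hU hA2 hx
  have df := aux_diff hU hf hx
  have d1 := aux_diff hU (aux_fderiv_smooth hU hf (1, 0)) hx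
  have d2 := aux_diff hU (aux_fderiv_smooth hU hf (0, 1)) hx
  have cI : ∀ {A : ℝ × ℝ → ℝ}, DifferentiableAt ℝ A x →
      DifferentiableAt ℝ (fun y => Complex.I * (A y : ℂ) * f y) x := fun hA =>
    ((Complex.ofRealCLM.differentiableAt.comp x hA).const_mul _).mul df
  have dd : DifferentiableAt ℝ (fderiv ℝ f) x :=
    ((hf.fderiv_of_isOpen (m := (⊤ : ℕ∞)) hU (by simp)).contDiffAt
      (hU.mem_nhds hx)).differentiableAt (by simp)
  have sym : fderiv ℝ (fun y => fderiv ℝ f y (0, 1)) x (1, 0)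
      = fderiv ℝ (fun y => fderiv ℝ f y (1, 0)) x (0, 1) := by
    rw [fderiv_clm_apply dd (by fun_prop), fderiv_clm_apply dd (by fun_prop)]
    have := ((hf.contDiffAt (hU.mem_nhds hx)).isSymmSndFDerivAt (by simp; exact WithTop.coe_le_coe.mpr le_top)) (1, 0) (0, 1)
    simpa using this
  have e1 : fderiv ℝ (D2 A2 f) x (1, 0) = fderiv ℝ (fun y => fderiv ℝ f y (0, 1)) x (1, 0)
      - Complex.I * ((A2 x : ℂ) * fderiv ℝ f x (1, 0) + ((fderiv ℝ A2 x (1, 0) : ℝ) : ℂ) * f x) := by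
    rw [← aux_fderiv_Imul A2 f dA2 df]
    change fderiv ℝ (fun y => fderiv ℝ f y (0, 1) - Complex.I * (A2 y : ℂ) * f y) x (1, 0) = _
    rw [fderiv_fun_sub d2 (cI dA2)]
    rfl
  have e2 : fderiv ℝ (D1 A1 f) x (0, 1) = fderiv ℝ (fun y => fderiv ℝ f y (1, 0)) x (0, 1)
      - Complex.I * ((A1 x : ℂ) * fderiv ℝ f x (0, 1) + ((fderiv ℝ A1 x (0, 1) : ℝ) : ℂ) * f x) := by
    rw [← aux_fderiv_Imul A1 f dA1 df]
    change fderiv ℝ (fun y => fderiv ℝ f y (1, 0) - Complex.I * (A1 y : ℂ) * f y) x (0, 1) = _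
    rw [fderiv_fun_sub d1 (cI dA1)]
    rfl
  unfold D1 D2 at *
  simp only [pd1, pd2, curv] at *
  rw [e1, e2, sym]
  push_cast
  ring

end aux

/-- Contraction of a twisted 1-form with a Killing field of the flat plane
(Lemma 2.2(a), flat case). -/
theorem twisted_laplacian_killing_contraction
    (U : Set (ℝ × ℝ)) (hU : IsOpen U) (A1 A2 : ℝ × ℝ → ℝ)
    (hA1 : ContDiffOn ℝ (⊤ : ℕ∞) A1 U) (hA2 : ContDiffOn ℝ (⊤ : ℕ∞) A2 U)
    (w1 w2 : ℝ × ℝ → ℂ) (hw1 : ContDiffOn ℝ (⊤ : ℕ∞) w1 U) (hw2 : ContDiffOn ℝ (⊤ : ℕ∞) w2 U)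
    (c1 c2 lam : ℝ)
    (X1 X2 : ℝ × ℝ → ℝ)
    (hX1 : X1 = fun x => c1 - lam * x.2) (hX2 : X2 = fun x => c2 + lam * x.1) :
    ∀ x ∈ U,
      -(D1 A1 (D1 A1 (fun y => (X1 y : ℂ) * w1 y + (X2 y : ℂ) * w2 y)) x
          + D2 A2 (D2 A2 (fun y => (X1 y : ℂ) * w1 y + (X2 y : ℂ) * w2 y)) x) =
        (X1 x : ℂ) * lapA1 A1 A2 w1 w2 x + (X2 x : ℂ) * lapA2 A1 A2 w1 w2 x
          + Complex.I * curv A1 A2 x * ((X2 x : ℂ) * w1 x - (X1 x : ℂ) * w2 x)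
          - 2 * (lam : ℂ) * (D1 A1 w2 x - D2 A2 w1 x) := by
  intro x hx
  have sX1 : ContDiffOn ℝ (⊤ : ℕ∞) X1 U := by rw [hX1]; fun_prop
  have sX2 : ContDiffOn ℝ (⊤ : ℕ∞) X2 U := by rw [hX2]; fun_prop
  have h1 : ∀ y, HasFDerivAt X1 (-(lam • ContinuousLinearMap.snd ℝ ℝ ℝ)) y := fun y => by
    rw [hX1]; exact (hasFDerivAt_snd.const_mul lam).const_sub c1
  have h2 : ∀ y, HasFDerivAt X2 (lam • ContinuousLinearMap.fst ℝ ℝ ℝ) y := fun y => by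
    rw [hX2]; exact (hasFDerivAt_fst.const_mul lam).const_add c2
  have p11 : ∀ y, pd1 X1 y = 0 := fun y => by simp [pd1, (h1 y).fderiv]
  have p21 : ∀ y, pd2 X1 y = -lam := fun y => by simp [pd2, (h1 y).fderiv]
  have p12 : ∀ y, pd1 X2 y = lam := fun y => by simp [pd1, (h2 y).fderiv]
  have p22 : ∀ y, pd2 X2 y = 0 := fun y => by simp [pd2, (h2 y).fderiv]
  have s11 := aux1_smooth hU hA1 hw1
  have s12 := aux1_smooth hU hA1 hw2
  have s21 := aux2_smooth hU hA2 hw1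
  have s22 := aux2_smooth hU hA2 hw2
  have slam : ContDiffOn ℝ (⊤ : ℕ∞) (fun _ : ℝ × ℝ => lam) U := contDiffOn_const
  have q1 : pd1 (fun _ : ℝ × ℝ => lam) x = 0 := by simp [pd1]
  have q2 : pd2 (fun _ : ℝ × ℝ => lam) x = 0 := by simp [pd2]
  have E1 : ∀ y ∈ U, D1 A1 (fun y => (X1 y : ℂ) * w1 y + (X2 y : ℂ) * w2 y) y
      = ((X1 y : ℂ) * D1 A1 w1 y + (X2 y : ℂ) * D1 A1 w2 y) + (lam : ℂ) * w2 y := by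
    intro y hy
    rw [aux1_add A1 (aux_diff hU (aux_smooth_mul sX1 hw1) hy)
      (aux_diff hU (aux_smooth_mul sX2 hw2) hy),
      aux1_mul A1 (aux_diff hU sX1 hy) (aux_diff hU hw1 hy),
      aux1_mul A1 (aux_diff hU sX2 hy) (aux_diff hU hw2 hy), p11, p12]
    push_cast
    ring
  have E2 : ∀ y ∈ U, D2 A2 (fun y => (X1 y : ℂ) * w1 y + (X2 y : ℂ) * w2 y) y
      = ((X1 y : ℂ) * D2 A2 w1 y + (X2 y : ℂ) * D2 A2 w2 y) - (lam : ℂ) * w1 y := by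
    intro y hy
    rw [aux2_add A2 (aux_diff hU (aux_smooth_mul sX1 hw1) hy)
      (aux_diff hU (aux_smooth_mul sX2 hw2) hy),
      aux2_mul A2 (aux_diff hU sX1 hy) (aux_diff hU hw1 hy),
      aux2_mul A2 (aux_diff hU sX2 hy) (aux_diff hU hw2 hy), p21, p22]
    push_cast
    ring
  have m1 := aux_smooth_mul sX1 s11
  have m2 := aux_smooth_mul sX2 s12
  have m3 := aux_smooth_mul sX1 s21
  have m4 := aux_smooth_mul sX2 s22
  rw [aux1_congr A1 hU hx E1, aux2_congr A2 hU hx E2,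
    aux1_add A1 (aux_diff hU (m1.add m2) hx) (aux_diff hU (aux_smooth_mul slam hw2) hx),
    aux2_sub A2 (aux_diff hU (m3.add m4) hx) (aux_diff hU (aux_smooth_mul slam hw1) hx),
    aux1_add A1 (aux_diff hU m1 hx) (aux_diff hU m2 hx),
    aux2_add A2 (aux_diff hU m3 hx) (aux_diff hU m4 hx),
    aux1_mul A1 (aux_diff hU sX1 hx) (aux_diff hU s11 hx),
    aux1_mul A1 (aux_diff hU sX2 hx) (aux_diff hU s12 hx),
    aux2_mul A2 (aux_diff hU sX1 hx) (aux_diff hU s21 hx),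
    aux2_mul A2 (aux_diff hU sX2 hx) (aux_diff hU s22 hx),
    aux1_mul A1 (aux_diff hU slam hx) (aux_diff hU hw2 hx),
    aux2_mul A2 (aux_diff hU slam hx) (aux_diff hU hw1 hx),
    p11, p12, p21, p22, q1, q2]
  unfold lapA1 lapA2
  rw [aux1_add A1 (aux_diff hU s11 hx) (aux_diff hU s22 hx),
    aux2_add A2 (aux_diff hU s11 hx) (aux_diff hU s22 hx),
    aux1_sub A1 (aux_diff hU s12 hx) (aux_diff hU s21 hx),
    aux2_sub A2 (aux_diff hU s12 hx) (aux_diff hU s21 hx),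
    aux_comm hU hA1 hA2 hw1 hx, aux_comm hU hA1 hA2 hw2 hx]
  push_cast
  ring
end
end

section
/- Second Jacobi operator on the test pair built from σ and φ (Lemma 4.1(b), flat torus case): let (u, A) be a smooth solution of the YMH equations on U and let X = (X₁, X₂) ∈ ℝ² be a constant vector field (a Killing field of the flat torus). Then, with v = (X₁ − iX₂)·σ₊ and a = (F − h)·(−X₂, X₁), one has pointwise on U: J²₁(v, a) = (|D₁u|² + |D₂u|²)·X₂ − 2·Re((X₂·D₁u − X₁·D₂u)·conj(D₁u)) and J²₂(v, a) = −(|D₁u|² + |D₂u|²)·X₁ − 2·Re((X₂·D₁u − X₁·D₂u)·conj(D₂u)). -/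
open MeasureTheory Complex

noncomputable section

/-- First component of the second Jacobi operator `J²` of the Yang--Mills--Higgs energy. -/
def J21 (ε : ℝ) (u : ℝ × ℝ → ℂ) (A1 A2 : ℝ × ℝ → ℝ)
    (v : ℝ × ℝ → ℂ) (a1 a2 : ℝ × ℝ → ℝ) (x : ℝ × ℝ) : ℝ :=
  ε ^ 2 * pd2 (fun y => pd1 a2 y - pd2 a1 y) x
    - (Complex.I * u x * (starRingEnd ℂ) (D1 A1 v x)).re
    - (Complex.I * v x * (starRingEnd ℂ) (D1 A1 u x)).re
    + ‖u x‖ ^ 2 * a1 x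

/-- Second component of the second Jacobi operator `J²` of the Yang--Mills--Higgs energy. -/
def J22 (ε : ℝ) (u : ℝ × ℝ → ℂ) (A1 A2 : ℝ × ℝ → ℝ)
    (v : ℝ × ℝ → ℂ) (a1 a2 : ℝ × ℝ → ℝ) (x : ℝ × ℝ) : ℝ :=
  -(ε ^ 2 * pd1 (fun y => pd1 a2 y - pd2 a1 y) x)
    - (Complex.I * u x * (starRingEnd ℂ) (D2 A2 v x)).re
    - (Complex.I * v x * (starRingEnd ℂ) (D2 A2 u x)).re
    + ‖u x‖ ^ 2 * a2 x

lemma smooth_dir {E : Type*} [NormedAddCommGroup E] [NormedSpace ℝ E] {f : ℝ × ℝ → E}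
    {x : ℝ × ℝ} (hf : ContDiffAt ℝ (⊤ : ℕ∞) f x) (w : ℝ × ℝ) :
    ContDiffAt ℝ (⊤ : ℕ∞) (fun y => fderiv ℝ f y w) x :=
  (hf.fderiv_right (m := (⊤ : ℕ∞)) (by simp)).clm_apply contDiffAt_const

lemma diff_of_smooth {E : Type*} [NormedAddCommGroup E] [NormedSpace ℝ E] {f : ℝ × ℝ → E}
    {x : ℝ × ℝ} (hf : ContDiffAt ℝ (⊤ : ℕ∞) f x) : DifferentiableAt ℝ f x :=
  hf.differentiableAt (by simp)

lemma pd_comm {f : ℝ × ℝ → ℂ} {x : ℝ × ℝ} (hf : ContDiffAt ℝ (⊤ : ℕ∞) f x) :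
    pd1 (pd2 f) x = pd2 (pd1 f) x := by
  have hd : DifferentiableAt ℝ (fderiv ℝ f) x :=
    diff_of_smooth (hf.fderiv_right (m := (⊤ : ℕ∞)) (by simp))
  have hs : IsSymmSndFDerivAt ℝ f x :=
    hf.isSymmSndFDerivAt (by simp only [minSmoothness_of_isRCLikeNormedField]; exact WithTop.coe_le_coe.mpr (le_top : (2 : ℕ∞) ≤ ⊤))
  have key : ∀ w z : ℝ × ℝ, fderiv ℝ (fun y => fderiv ℝ f y w) x z
      = fderiv ℝ (fderiv ℝ f) x z w := by
    intro w z
    rw [fderiv_clm_apply hd (differentiableAt_const w)]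
    simp
  have h1 := key (0, 1) (1, 0)
  have h2 := key (1, 0) (0, 1)
  unfold pd1 pd2
  rw [h1, h2]
  exact hs _ _

lemma fderiv_cov {A : ℝ × ℝ → ℝ} {g f : ℝ × ℝ → ℂ} {x : ℝ × ℝ}
    (hg : DifferentiableAt ℝ g x) (hA : DifferentiableAt ℝ A x) (hf : DifferentiableAt ℝ f x)
    (w : ℝ × ℝ) :
    fderiv ℝ (fun y => g y - Complex.I * (A y) * f y) x w
      = fderiv ℝ g x w - Complex.I * ((fderiv ℝ A x w : ℝ) * f x + A x * fderiv ℝ f x w) := by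
  have hAc : HasFDerivAt (fun y => (A y : ℂ)) (Complex.ofRealCLM.comp (fderiv ℝ A x)) x :=
    Complex.ofRealCLM.hasFDerivAt.comp x hA.hasFDerivAt
  have := hg.hasFDerivAt.sub ((hAc.const_mul Complex.I).mul hf.hasFDerivAt)
  have h2 := congrArg (fun L => L w) this.fderiv
  refine h2.trans ?_
  simp
  ring

lemma smooth_cov {A : ℝ × ℝ → ℝ} {g f : ℝ × ℝ → ℂ} {x : ℝ × ℝ}
    (hg : ContDiffAt ℝ (⊤ : ℕ∞) g x) (hA : ContDiffAt ℝ (⊤ : ℕ∞) A x)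
    (hf : ContDiffAt ℝ (⊤ : ℕ∞) f x) :
    ContDiffAt ℝ (⊤ : ℕ∞) (fun y => g y - Complex.I * (A y) * f y) x :=
  hg.sub ((contDiffAt_const.mul (Complex.ofRealCLM.contDiff.contDiffAt.comp x hA)).mul hf)

lemma cov_comm {A1 A2 : ℝ × ℝ → ℝ} {u : ℝ × ℝ → ℂ} {x : ℝ × ℝ}
    (hu : ContDiffAt ℝ (⊤ : ℕ∞) u x) (h1 : ContDiffAt ℝ (⊤ : ℕ∞) A1 x)
    (h2 : ContDiffAt ℝ (⊤ : ℕ∞) A2 x) :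
    D1 A1 (D2 A2 u) x - D2 A2 (D1 A1 u) x = - Complex.I * (curv A1 A2 x : ℝ) * u x := by
  have e1 := fderiv_cov (diff_of_smooth (smooth_dir hu (0, 1))) (diff_of_smooth h2)
    (diff_of_smooth hu) (1, 0)
  have e2 := fderiv_cov (diff_of_smooth (smooth_dir hu (1, 0))) (diff_of_smooth h1)
    (diff_of_smooth hu) (0, 1)
  have e3 := pd_comm hu
  have e1' : pd1 (D2 A2 u) x = pd1 (pd2 u) x
    - Complex.I * ((pd1 A2 x : ℝ) * u x + A2 x * pd1 u x) := e1
  have e2' : pd2 (D1 A1 u) x = pd2 (pd1 u) x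
    - Complex.I * ((pd2 A1 x : ℝ) * u x + A1 x * pd2 u x) := e2
  have d1 : D1 A1 (D2 A2 u) x = pd1 (D2 A2 u) x
    - Complex.I * A1 x * (pd2 u x - Complex.I * A2 x * u x) := rfl
  have d2 : D2 A2 (D1 A1 u) x = pd2 (D1 A1 u) x
    - Complex.I * A2 x * (pd1 u x - Complex.I * A1 x * u x) := rfl
  rw [d1, d2, e1', e2', e3, curv]
  push_cast
  ring

lemma fderiv_re_conj {f g : ℝ × ℝ → ℂ} {x : ℝ × ℝ}
    (hf : DifferentiableAt ℝ f x) (hg : DifferentiableAt ℝ g x) (w : ℝ × ℝ) :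
    fderiv ℝ (fun y => ((starRingEnd ℂ) (f y) * g y).re) x w
      = ((starRingEnd ℂ) (fderiv ℝ f x w) * g x + (starRingEnd ℂ) (f x) * fderiv ℝ g x w).re := by
  have hc : HasFDerivAt (fun y => (starRingEnd ℂ) (f y))
      ((Complex.conjCLE : ℂ →L[ℝ] ℂ).comp (fderiv ℝ f x)) x :=
    (Complex.conjCLE : ℂ →L[ℝ] ℂ).hasFDerivAt.comp x hf.hasFDerivAt
  have h : HasFDerivAt (fun y => ((starRingEnd ℂ) (f y) * g y).re) _ x :=
    Complex.reCLM.hasFDerivAt.comp x (hc.mul hg.hasFDerivAt)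
  have h2 := congrArg (fun L => L w) h.fderiv
  refine h2.trans ?_
  simp
  ring

lemma fderiv_hfun {ε : ℝ} (hε : 0 < ε) {u : ℝ × ℝ → ℂ} {x : ℝ × ℝ}
    (hu : DifferentiableAt ℝ u x) (w : ℝ × ℝ) :
    DifferentiableAt ℝ (hfun ε u) x ∧
    ε ^ 2 * fderiv ℝ (hfun ε u) x w = - ((starRingEnd ℂ) (u x) * fderiv ℝ u x w).re := by
  have e : hfun ε u = fun y => (1 - ((starRingEnd ℂ) (u y) * u y).re) * (2 * ε ^ 2)⁻¹ := by
    funext y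
    rw [hfun, div_eq_mul_inv, Complex.conj_mul']
    norm_cast
  have hd : DifferentiableAt ℝ (fun y => ((starRingEnd ℂ) (u y) * u y).re) x := by
    have hc : DifferentiableAt ℝ (fun y => (starRingEnd ℂ) (u y)) x :=
      (Complex.conjCLE : ℂ →L[ℝ] ℂ).differentiableAt.comp x hu
    exact Complex.reCLM.differentiableAt.comp x (hc.mul hu)
  have hh := ((hd.hasFDerivAt.const_sub 1).mul_const ((2 * ε ^ 2)⁻¹))
  rw [e]
  refine ⟨hh.differentiableAt, ?_⟩
  rw [hh.fderiv]
  simp only [ContinuousLinearMap.smul_apply, ContinuousLinearMap.neg_apply,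
    fderiv_re_conj hu hu w, smul_eq_mul]
  have : ε ≠ 0 := hε.ne'
  field_simp
  simp
  ring

/-- Second Jacobi operator applied to the test pair built from `σ₊` and `φ = (F − h)`
contracted with a constant Killing field (Lemma 4.1(b), flat torus case). -/
theorem J2_on_test_pair
    (ε : ℝ) (hε : 0 < ε) (U : Set (ℝ × ℝ)) (hU : IsOpen U)
    (u : ℝ × ℝ → ℂ) (A1 A2 : ℝ × ℝ → ℝ)
    (hu : ContDiffOn ℝ (⊤ : ℕ∞) u U) (hA1 : ContDiffOn ℝ (⊤ : ℕ∞) A1 U) (hA2 : ContDiffOn ℝ (⊤ : ℕ∞) A2 U)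
    (hYMH : IsYMHOn ε u A1 A2 U)
    (X1 X2 : ℝ)
    (v : ℝ × ℝ → ℂ) (a1 a2 : ℝ × ℝ → ℝ)
    (hv : v = fun y => ((X1 : ℂ) - Complex.I * (X2 : ℂ)) * sigP u A1 A2 y)
    (ha1 : a1 = fun y => (curv A1 A2 y - hfun ε u y) * (-X2))
    (ha2 : a2 = fun y => (curv A1 A2 y - hfun ε u y) * X1) :
    ∀ x ∈ U,
      (J21 ε u A1 A2 v a1 a2 x =
        (‖D1 A1 u x‖ ^ 2 + ‖D2 A2 u x‖ ^ 2) * X2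
          - 2 * (((X2 : ℂ) * D1 A1 u x - (X1 : ℂ) * D2 A2 u x)
              * (starRingEnd ℂ) (D1 A1 u x)).re) ∧
      (J22 ε u A1 A2 v a1 a2 x =
        -((‖D1 A1 u x‖ ^ 2 + ‖D2 A2 u x‖ ^ 2) * X1)
          - 2 * (((X2 : ℂ) * D1 A1 u x - (X1 : ℂ) * D2 A2 u x)
              * (starRingEnd ℂ) (D2 A2 u x)).re) := by
  obtain ⟨hY1, hY2, hY3⟩ := hYMH
  have su : ∀ y ∈ U, ContDiffAt ℝ (⊤ : ℕ∞) u y := fun y hy => hu.contDiffAt (hU.mem_nhds hy)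
  have s1 : ∀ y ∈ U, ContDiffAt ℝ (⊤ : ℕ∞) A1 y := fun y hy => hA1.contDiffAt (hU.mem_nhds hy)
  have s2 : ∀ y ∈ U, ContDiffAt ℝ (⊤ : ℕ∞) A2 y := fun y hy => hA2.contDiffAt (hU.mem_nhds hy)
  have sD1 : ∀ y ∈ U, ContDiffAt ℝ (⊤ : ℕ∞) (D1 A1 u) y := fun y hy =>
    smooth_cov (smooth_dir (su y hy) (1, 0)) (s1 y hy) (su y hy)
  have sD2 : ∀ y ∈ U, ContDiffAt ℝ (⊤ : ℕ∞) (D2 A2 u) y := fun y hy =>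
    smooth_cov (smooth_dir (su y hy) (0, 1)) (s2 y hy) (su y hy)
  have hvd : ∀ y ∈ U, ∀ w, DifferentiableAt ℝ v y ∧ fderiv ℝ v y w =
      ((X1 : ℂ) - Complex.I * (X2 : ℂ)) *
        (fderiv ℝ (D1 A1 u) y w + Complex.I * fderiv ℝ (D2 A2 u) y w) := by
    intro y hy w
    have h := (((diff_of_smooth (sD1 y hy)).hasFDerivAt.add
      ((diff_of_smooth (sD2 y hy)).hasFDerivAt.const_mul Complex.I)).const_mul
        ((X1 : ℂ) - Complex.I * (X2 : ℂ)))
    have h' : HasFDerivAt v _ y := hv ▸ h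
    refine ⟨h'.differentiableAt, ?_⟩
    rw [h'.fderiv]
    simp
    ring
  have hdiv : ∀ y ∈ U, ε ^ 2 * (pd1 a2 y - pd2 a1 y) = ((starRingEnd ℂ) (u y) * v y).re := by
    intro y hy
    have du := diff_of_smooth (su y hy)
    have dF : DifferentiableAt ℝ (curv A1 A2) y :=
      (diff_of_smooth (smooth_dir (s2 y hy) (1, 0))).sub
        (diff_of_smooth (smooth_dir (s1 y hy) (0, 1)))
    have dh := (fderiv_hfun hε du (1, 0)).1
    have h1 := (fderiv_hfun hε du (1, 0)).2
    have h2 := (fderiv_hfun hε du (0, 1)).2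
    have p1 : pd1 a2 y = (pd1 (curv A1 A2) y - pd1 (hfun ε u) y) * X1 := by
      have h := (dF.hasFDerivAt.sub dh.hasFDerivAt).mul_const X1
      have h' : HasFDerivAt a2 _ y := ha2 ▸ h
      rw [pd1, h'.fderiv]
      simp [pd1]; ring
    have p2 : pd2 a1 y = (pd2 (curv A1 A2) y - pd2 (hfun ε u) y) * (-X2) := by
      have h := (dF.hasFDerivAt.sub dh.hasFDerivAt).mul_const (-X2)
      have h' : HasFDerivAt a1 _ y := ha1 ▸ h
      rw [pd2, h'.fderiv]
      simp [pd2]; ring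
    have h1' : ε ^ 2 * pd1 (hfun ε u) y = - ((starRingEnd ℂ) (u y) * pd1 u y).re := h1
    have h2' : ε ^ 2 * pd2 (hfun ε u) y = - ((starRingEnd ℂ) (u y) * pd2 u y).re := h2
    have g1 := hY2 y hy
    have g2 := hY3 y hy
    have : ε ^ 2 * (pd1 a2 y - pd2 a1 y) =
      (ε ^ 2 * pd1 (curv A1 A2) y - ε ^ 2 * pd1 (hfun ε u) y) * X1
      + (ε ^ 2 * pd2 (curv A1 A2) y - ε ^ 2 * pd2 (hfun ε u) y) * X2 := by
      rw [p1, p2]; ring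
    rw [this, g1, g2, h1', h2', hv]
    simp [sigP, D1, D2]
    ring
  intro x hx
  have du := diff_of_smooth (su x hx)
  have hdd : ∀ w, ε ^ 2 * fderiv ℝ (fun y => pd1 a2 y - pd2 a1 y) x w =
      ((starRingEnd ℂ) (fderiv ℝ u x w) * v x + (starRingEnd ℂ) (u x) * fderiv ℝ v x w).re := by
    intro w
    rw [← fderiv_re_conj du (hvd x hx w).1 w]
    have hev : (fun y => pd1 a2 y - pd2 a1 y) =ᶠ[nhds x]
        fun y => (ε ^ 2)⁻¹ * ((starRingEnd ℂ) (u y) * v y).re := by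
      filter_upwards [hU.mem_nhds hx] with y hy
      rw [← hdiv y hy]
      have : ε ≠ 0 := hε.ne'
      field_simp
    rw [hev.fderiv_eq]
    have hd : DifferentiableAt ℝ (fun y => ((starRingEnd ℂ) (u y) * v y).re) x := by
      have hc : DifferentiableAt ℝ (fun y => (starRingEnd ℂ) (u y)) x :=
        (Complex.conjCLE : ℂ →L[ℝ] ℂ).differentiableAt.comp x du
      exact Complex.reCLM.differentiableAt.comp x (hc.mul (hvd x hx w).1)
    rw [(hd.hasFDerivAt.const_mul ((ε ^ 2)⁻¹)).fderiv]
    have : ε ≠ 0 := hε.ne'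
    simp only [ContinuousLinearMap.smul_apply, smul_eq_mul]
    field_simp
  have c := cov_comm (su x hx) (s1 x hx) (s2 x hx)
  have y1 := hY1 x hx
  have k1 : ε ^ 2 * pd2 (fun y => pd1 a2 y - pd2 a1 y) x = _ := hdd (0, 1)
  have k2 : ε ^ 2 * pd1 (fun y => pd1 a2 y - pd2 a1 y) x = _ := hdd (1, 0)
  -- covariant Leibniz rule
  have L : ∀ (z z' t t' : ℂ) (r : ℝ), ((starRingEnd ℂ) z' * t + (starRingEnd ℂ) z * t').re =
      ((starRingEnd ℂ) (z' - Complex.I * r * z) * t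
        + (starRingEnd ℂ) z * (t' - Complex.I * r * t)).re := by
    intro z z' t t' r
    simp
    ring
  rw [L _ _ _ _ (A2 x)] at k1
  rw [L _ _ _ _ (A1 x)] at k2
  have k1' : ε ^ 2 * pd2 (fun y => pd1 a2 y - pd2 a1 y) x =
    ((starRingEnd ℂ) (D2 A2 u x) * v x + (starRingEnd ℂ) (u x) * D2 A2 v x).re := k1
  have k2' : ε ^ 2 * pd1 (fun y => pd1 a2 y - pd2 a1 y) x =
    ((starRingEnd ℂ) (D1 A1 u x) * v x + (starRingEnd ℂ) (u x) * D1 A1 v x).re := k2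
  have vx : v x = ((X1 : ℂ) - Complex.I * (X2 : ℂ)) * (D1 A1 u x + Complex.I * D2 A2 u x) := by
    rw [hv]; rfl
  have Dv : D1 A1 v x - Complex.I * D2 A2 v x = ((X1 : ℂ) - Complex.I * (X2 : ℂ)) *
      (((curv A1 A2 x - hfun ε u x : ℝ) : ℂ) * u x) := by
    have w1 : D1 A1 v x = ((X1 : ℂ) - Complex.I * (X2 : ℂ)) *
        (D1 A1 (D1 A1 u) x + Complex.I * D1 A1 (D2 A2 u) x) := by
      have := (hvd x hx (1, 0)).2
      simp only [D1, pd1] at *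
      rw [this, vx]; ring
    have w2 : D2 A2 v x = ((X1 : ℂ) - Complex.I * (X2 : ℂ)) *
        (D2 A2 (D1 A1 u) x + Complex.I * D2 A2 (D2 A2 u) x) := by
      have := (hvd x hx (0, 1)).2
      simp only [D2, pd2] at *
      rw [this, vx]; ring
    rw [w1, w2]
    push_cast
    linear_combination ((X1 : ℂ) - Complex.I * (X2 : ℂ)) * (Complex.I * c - y1)
      + ((X1 : ℂ) - Complex.I * (X2 : ℂ)) * (- D2 A2 (D2 A2 u) x - (curv A1 A2 x : ℂ) * u x) * Complex.I_sq
  have a1x : a1 x = (curv A1 A2 x - hfun ε u x) * (-X2) := by rw [ha1]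
  have a2x : a2 x = (curv A1 A2 x - hfun ε u x) * X1 := by rw [ha2]
  rw [J21, J22, k1', k2', a1x, a2x, vx]
  clear k1 k2 k1' k2' a1x a2x vx hdd hdiv hvd c y1
  generalize curv A1 A2 x - hfun ε u x = φ at *
  generalize D1 A1 v x = p' at *
  generalize D2 A2 v x = q' at *
  generalize D1 A1 u x = p at *
  generalize D2 A2 u x = q at *
  generalize u x = z at *
  have Dr := congrArg Complex.re Dv
  have Di := congrArg Complex.im Dv
  simp only [Complex.sq_norm, Complex.normSq_apply]
  simp at Dr Di ⊢
  constructor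
  · linear_combination z.im * Dr - z.re * Di
  · linear_combination -z.re * Dr - z.im * Di
end
end
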